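/- Let m ≥ 1, r ≥ 0, let (Q_0,P_0), …, (Q_r,P_r) be r+1 pairs of m×m matrices of independent commuting indeterminates, and set A_k := Σ_{i=0}^{r−k} Q_i P_{i+k} for 0 ≤ k ≤ r. For 1 ≤ s ≤ 2r+1 define the spectral invariants S_s := Σ_{0 ≤ j,l ≤ r, j+l = s−1} Tr(A_j A_l) (so that Tr A(z)^2 = Σ_s S_s z^{−s−1} for A(z) = Σ_k A_k z^{−k−1}). Then with respect to the canonical Poisson bracket the spectral invariants are in involution: {S_s, S_{s'}} = 0 for all 1 ≤ s, s' ≤ 2r+1. -/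

import Mathlib

/-!
Involutivity of the quadratic spectral invariants `S_s = Σ_{j+l = s−1} Tr(A_jA_l)` of a
single Takiff co-adjoint orbit, in lifted Darboux coordinates.
-/

open MvPolynomial

noncomputable section

/-- Index type for the entries of `N` pairs of `m × m` matrices of indeterminates. -/
abbrev Idx (N m : ℕ) := Fin N × Bool × Fin m × Fin m

/-- The matrix `Q_α` of indeterminates. -/
def Qm (N m : ℕ) (α : Fin N) : Matrix (Fin m) (Fin m) (MvPolynomial (Idx N m) ℂ) :=
  Matrix.of fun i j => X (α, false, i, j)

/-- The matrix `P_α` of indeterminates. -/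
def Pm (N m : ℕ) (α : Fin N) : Matrix (Fin m) (Fin m) (MvPolynomial (Idx N m) ℂ) :=
  Matrix.of fun i j => X (α, true, i, j)

/-- The canonical Poisson bracket. -/
def pois {N m : ℕ} (f g : MvPolynomial (Idx N m) ℂ) : MvPolynomial (Idx N m) ℂ :=
  ∑ α : Fin N, ∑ i : Fin m, ∑ j : Fin m,
    (pderiv (α, true, i, j) f * pderiv (α, false, j, i) g
      - pderiv (α, true, i, j) g * pderiv (α, false, j, i) f)

/-- The Takiff parametrisation `A_k := Σ_{i=0}^{r−k} Q_i P_{i+k}` (given `r+1` pairs). -/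
def Amat (m r : ℕ) (k : ℕ) : Matrix (Fin m) (Fin m) (MvPolynomial (Idx (r+1) m) ℂ) :=
  ∑ i : Fin (r+1), ∑ j : Fin (r+1),
    if (j : ℕ) = (i : ℕ) + k then Qm (r+1) m i * Pm (r+1) m j else 0

/-- The spectral invariant `S_s := Σ_{0 ≤ j,l ≤ r, j+l = s−1} Tr(A_jA_l)`
(stated via `j + l + 1 = s` to avoid natural subtraction). -/
def Sinv (m r : ℕ) (s : ℕ) : MvPolynomial (Idx (r+1) m) ℂ :=
  ∑ j ∈ Finset.range (r+1), ∑ l ∈ Finset.range (r+1),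
    if j + l + 1 = s then (Amat m r j * Amat m r l).trace else 0

end

/-!
Put `S_n = Σ_{i+j=n} Tr(A_i A_j)`, and `M(T) = Σ T_{αβ} Q_α P_β` for a scalar matrix `T`. The
canonical bracket gives `{M(T)_{ab}, M(U)_{cd}} = δ_{bc} M(TU)_{ad} - δ_{da} M(UT)_{cb}`. Since
`A_k = M(Λ^k)` for the nilpotent shift `Λ`, the matrices `A_k` satisfy the Takiff relations, whence
the Lax equations `{S_n, A_k} = 2 Σ_{i+j=n} [A_j, A_{k+i}]`. Hence `{S_n, S_{n'}}` is a multiple of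
`Σ_{i+j=n, i'+j'=n'} Tr([A_{i+i'}, A_j] A_{j'})`. As `Tr([X, Y] Z)` is alternating, this sum does
not change under `(n, n') ↦ (n - 1, n' + 1)`, and it vanishes at `n = 0`.
-/

open Matrix
open Finset hiding antidiagonal mem_antidiagonal diag
open Finset.HasAntidiagonal (antidiagonal mem_antidiagonal swap_mem_antidiagonal)

section AlternatingSums

variable {M : Type*} [AddCommGroup M]

theorem sum_antidiagonal_eq_zero_of_alternating (f : ℕ → ℕ → M) (hdiag : ∀ a, f a a = 0)
    (hswap : ∀ a b, f a b = -f b a) (n : ℕ) : ∑ p ∈ antidiagonal n, f p.1 p.2 = 0 := by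
  refine sum_involution (fun p _ => p.swap) ?_ ?_ ?_ ?_
  · intro p _
    rw [hswap p.1 p.2]
    exact neg_add_cancel _
  · rintro ⟨a, b⟩ _ hne heq
    obtain rfl : b = a := congrArg Prod.fst heq
    exact hne (hdiag b)
  · exact fun p hp => swap_mem_antidiagonal.mpr hp
  · exact fun p _ => p.swap_swap

theorem sum_antidiagonal_sum_antidiagonal_eq_zero_of_alternating (F : ℕ → ℕ → ℕ → M)
    (hdiag₁₂ : ∀ a c, F a a c = 0) (hswap₁₂ : ∀ a b c, F a b c = -F b a c)
    (hdiag₁₃ : ∀ a b, F a b a = 0) (hswap₁₃ : ∀ a b c, F a b c = -F c b a) (n n' : ℕ) :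
    ∑ p ∈ antidiagonal n, ∑ q ∈ antidiagonal n', F (p.1 + q.1) q.2 p.2 = 0 := by
  have sum₁₂ (c k : ℕ) : ∑ q ∈ antidiagonal k, F q.1 q.2 c = 0 :=
    sum_antidiagonal_eq_zero_of_alternating (F · · c) (hdiag₁₂ · c) (hswap₁₂ · · c) k
  have sum₁₃ (b k : ℕ) : ∑ p ∈ antidiagonal k, F p.1 b p.2 = 0 :=
    sum_antidiagonal_eq_zero_of_alternating (F · b ·) (hdiag₁₃ · b) (hswap₁₃ · b ·) k
  induction n generalizing n' with
  | zero => simpa using sum₁₂ 0 n'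
  | succ n ih =>
    have shift : ∑ p ∈ antidiagonal n, ∑ q ∈ antidiagonal n', F (p.1 + (q.1 + 1)) q.2 p.2 = 0 := by
      simpa only [Nat.sum_antidiagonal_succ, sum_add_distrib, add_zero, sum₁₃, zero_add]
        using ih (n' + 1)
    simpa only [Nat.sum_antidiagonal_succ, zero_add, sum₁₂, add_right_comm, add_assoc] using shift

end AlternatingSums

section TraceForm

variable {n R : Type*} [Fintype n] [CommRing R]

theorem trace_lie_mul_swap_left (X Y Z : Matrix n n R) :
    (⁅X, Y⁆ * Z).trace = -(⁅Y, X⁆ * Z).trace := by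
  rw [Ring.lie_def, Ring.lie_def, ← trace_neg, ← neg_mul, neg_sub]

theorem trace_lie_mul_swap_outer (X Y Z : Matrix n n R) :
    (⁅X, Y⁆ * Z).trace = -(⁅Z, Y⁆ * X).trace := by
  simp only [Ring.lie_def, sub_mul, trace_sub]
  rw [trace_mul_cycle Y Z X, trace_mul_cycle Y X Z, neg_sub]

theorem trace_lie_mul_self (X Y : Matrix n n R) : (⁅X, Y⁆ * X).trace = 0 := by
  rw [Ring.lie_def, sub_mul, trace_sub, trace_mul_cycle Y X X, sub_self]

theorem sum_antidiagonal_trace_lie_mul_eq_zero (A : ℕ → Matrix n n R) (N N' : ℕ) :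
    ∑ p ∈ antidiagonal N, ∑ q ∈ antidiagonal N', (⁅A (p.1 + q.1), A q.2⁆ * A p.2).trace = 0 :=
  sum_antidiagonal_sum_antidiagonal_eq_zero_of_alternating
    (fun a b c => (⁅A a, A b⁆ * A c).trace)
    (fun _ _ => by rw [Ring.lie_def, sub_self, zero_mul, trace_zero])
    (fun _ _ _ => trace_lie_mul_swap_left _ _ _) (fun _ _ => trace_lie_mul_self _ _)
    (fun _ _ _ => trace_lie_mul_swap_outer _ _ _) N N'

end TraceForm

section TakiffBracket

variable {K R n : Type*} [CommSemiring K] [CommRing R] [Algebra K R] [Fintype n]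

theorem derivation_trace_mul (D : Derivation K R R) (X Y : Matrix n n R) :
    D (X * Y).trace = (X.map D * Y).trace + (Y.map D * X).trace := by
  simp only [trace, diag, mul_apply, map_sum, Derivation.leibniz, smul_eq_mul, map_apply,
    sum_add_distrib]
  rw [add_comm, sum_comm (f := fun i j => X i j * D (Y j i))]
  simp only [mul_comm]

/-- The quadratic spectral invariants of the family `A`: the coefficient of `z ^ N` in the power
series `Tr (Σ A_k z ^ k) ^ 2`. For `A = Amat m r` it is `S_{N + 1}`, so the indices are shifted. -/
def traceSqCoeff (A : ℕ → Matrix n n R) (N : ℕ) : R :=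
  ∑ p ∈ antidiagonal N, (A p.1 * A p.2).trace

theorem derivation_traceSqCoeff (D : Derivation K R R) (A : ℕ → Matrix n n R) (N : ℕ) :
    D (traceSqCoeff A N) = 2 * ∑ p ∈ antidiagonal N, ((A p.1).map D * A p.2).trace := by
  simp only [traceSqCoeff, map_sum, derivation_trace_mul, sum_add_distrib, two_mul]
  congr 1
  exact Nat.sum_antidiagonal_swap (f := fun p => ((A p.1).map D * A p.2).trace)

variable [DecidableEq n] {br : R → Derivation K R R} {A : ℕ → Matrix n n R}

/-- The matrices `A k` satisfy the Lie–Poisson relations of the Takiff algebra of `gl n`, for a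
bracket `{f, g}` encoded as `br f g`. Truncation in degree `r` amounts to `A k = 0` for `r < k`. -/
def SatisfiesTakiffBracket (br : R → Derivation K R R) (A : ℕ → Matrix n n R) : Prop :=
  ∀ k l a b c d, br (A k a b) (A l c d) =
    (if b = c then A (k + l) a d else 0) - if d = a then A (k + l) c b else 0

theorem SatisfiesTakiffBracket.trace_map_mul (hA : SatisfiesTakiffBracket br A) (k l : ℕ)
    (a b : n) (X : Matrix n n R) :
    ((A l).map (br (A k a b)) * X).trace = ⁅A (k + l), X⁆ a b := by
  simp only [trace, diag, mul_apply, map_apply, hA k l, Ring.lie_def, Matrix.sub_apply, sub_mul,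
    ite_mul, zero_mul, sum_sub_distrib]
  congr 1
  · rw [sum_comm]
    simp
  · simp [mul_comm]

theorem SatisfiesTakiffBracket.map_bracket_traceSqCoeff (hA : SatisfiesTakiffBracket br A)
    (hbr : ∀ f g, br f g = -br g f) (N k : ℕ) :
    (A k).map (br (traceSqCoeff A N)) =
      (-2 : R) • ∑ q ∈ antidiagonal N, ⁅A (k + q.1), A q.2⁆ := by
  ext a b
  rw [map_apply, hbr, derivation_traceSqCoeff]
  simp only [hA.trace_map_mul, Matrix.smul_apply, Matrix.sum_apply, smul_eq_mul, neg_mul]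

theorem SatisfiesTakiffBracket.bracket_traceSqCoeff_eq_zero (hA : SatisfiesTakiffBracket br A)
    (hbr : ∀ f g, br f g = -br g f) (N N' : ℕ) :
    br (traceSqCoeff A N) (traceSqCoeff A N') = 0 := by
  have pairing_map (p : ℕ × ℕ) :
      ((A p.1).map (br (traceSqCoeff A N)) * A p.2).trace =
        -2 * ∑ q ∈ antidiagonal N, (⁅A (p.1 + q.1), A q.2⁆ * A p.2).trace := by
    rw [hA.map_bracket_traceSqCoeff hbr, smul_mul, trace_smul, sum_mul, trace_sum, smul_eq_mul]
  simp only [derivation_traceSqCoeff, pairing_map, ← mul_sum,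
    sum_antidiagonal_trace_lie_mul_eq_zero, mul_zero]

end TakiffBracket

section CanonicalBracket

theorem derivation_sum_apply {K R M ι : Type*} [CommSemiring K] [CommSemiring R] [Algebra K R]
    [AddCommMonoid M] [Module K M] [Module R M] (s : Finset ι) (D : ι → Derivation K R M) (x : R) :
    (∑ i ∈ s, D i) x = ∑ i ∈ s, D i x := by
  rw [← Derivation.coeFnAddMonoidHom_apply, map_sum, Finset.sum_apply]
  rfl

variable {N m : ℕ}

/-- The canonical Poisson bracket `{f, ·}` as a derivation. -/
noncomputable def poisDerivation (f : MvPolynomial (Idx N m) ℂ) :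
    Derivation ℂ (MvPolynomial (Idx N m) ℂ) (MvPolynomial (Idx N m) ℂ) :=
  ∑ α : Fin N, ∑ i : Fin m, ∑ j : Fin m,
    (pderiv (α, true, i, j) f • pderiv (α, false, j, i)
      - pderiv (α, false, j, i) f • pderiv (α, true, i, j))

theorem poisDerivation_apply (f g : MvPolynomial (Idx N m) ℂ) :
    poisDerivation f g = pois f g := by
  simp only [poisDerivation, pois, derivation_sum_apply, Derivation.sub_apply,
    Derivation.smul_apply, smul_eq_mul, mul_comm (pderiv (_, false, _, _) f)]

theorem poisDerivation_antisymm (f g : MvPolynomial (Idx N m) ℂ) :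
    poisDerivation f g = -poisDerivation g f := by
  simp only [poisDerivation_apply, pois, ← sum_neg_distrib, neg_sub]

/-- The matrix `M(T) = Σ T α β Q_α P_β`, which for `T` a power of the nilpotent shift is one of the
Takiff matrices `A_k`. -/
noncomputable def contractQP (T : Matrix (Fin N) (Fin N) ℂ) :
    Matrix (Fin m) (Fin m) (MvPolynomial (Idx N m) ℂ) :=
  ∑ α, ∑ β, T α β • (Qm N m α * Pm N m β)

theorem contractQP_mul (T U : Matrix (Fin N) (Fin N) ℂ) :
    contractQP (T * U) =
      ∑ α, (∑ β, T β α • Qm N m β) * ∑ γ, U α γ • Pm N m γ := by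
  simp only [contractQP, sum_mul_sum, smul_mul_smul_comm, mul_apply, sum_smul]
  exact sum_comm_cycle

theorem pderiv_true_contractQP (T : Matrix (Fin N) (Fin N) ℂ) (α : Fin N) (i j a b : Fin m) :
    pderiv (α, true, i, j) (contractQP T a b) =
      if b = j then (∑ β, T β α • Qm N m β) a i else 0 := by
  have leibniz (β γ : Fin N) : pderiv (α, true, i, j) ((Qm N m β * Pm N m γ) a b) =
      if γ = α ∧ b = j then Qm N m β a i else 0 := by
    simp [mul_apply, Qm, Pm, pderiv_X, Pi.single_apply, ite_and]
  simp only [contractQP, Matrix.sum_apply, Matrix.smul_apply, map_sum, Derivation.map_smul, leibniz]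
  split_ifs with h <;> simp [h]

theorem pderiv_false_contractQP (T : Matrix (Fin N) (Fin N) ℂ) (α : Fin N) (i j a b : Fin m) :
    pderiv (α, false, i, j) (contractQP T a b) =
      if a = i then (∑ β, T α β • Pm N m β) j b else 0 := by
  have leibniz (β γ : Fin N) : pderiv (α, false, i, j) ((Qm N m β * Pm N m γ) a b) =
      if β = α ∧ a = i then Pm N m γ j b else 0 := by
    simp [mul_apply, Qm, Pm, pderiv_X, Pi.single_apply, ite_and]
  simp only [contractQP, Matrix.sum_apply, Matrix.smul_apply, map_sum, Derivation.map_smul, leibniz]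
  split_ifs with h <;> simp [h]

theorem sum_pderiv_contractQP_mul_pderiv_contractQP (T U : Matrix (Fin N) (Fin N) ℂ)
    (a b c d : Fin m) :
    ∑ α, ∑ i, ∑ j, pderiv (α, true, i, j) (contractQP T a b) *
        pderiv (α, false, j, i) (contractQP U c d) =
      if b = c then contractQP (T * U) a d else 0 := by
  simp [pderiv_true_contractQP, pderiv_false_contractQP, contractQP_mul, Matrix.sum_apply,
    mul_apply]

theorem pois_contractQP (T U : Matrix (Fin N) (Fin N) ℂ) (a b c d : Fin m) :
    pois (contractQP T a b) (contractQP U c d) =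
      (if b = c then contractQP (T * U) a d else 0) -
        if d = a then contractQP (U * T) c b else 0 := by
  simp only [pois, sum_sub_distrib, sum_pderiv_contractQP_mul_pderiv_contractQP]

end CanonicalBracket

section Takiff

/-- The `k`-th power of the nilpotent upper shift of size `N`, given by its entries; it is zero for
`N ≤ k`. -/
def shiftMatrix (K : Type*) [Zero K] [One K] (N k : ℕ) : Matrix (Fin N) (Fin N) K :=
  of fun i j => if (j : ℕ) = i + k then 1 else 0

theorem shiftMatrix_mul (K : Type*) [NonAssocSemiring K] (N k l : ℕ) :
    shiftMatrix K N k * shiftMatrix K N l = shiftMatrix K N (k + l) := by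
  ext i j
  simp only [shiftMatrix, mul_apply, of_apply, ite_mul, one_mul, zero_mul]
  by_cases hik : (i : ℕ) + k < N
  · rw [sum_eq_single ⟨i + k, hik⟩]
    · simp [add_assoc]
    · exact fun x _ hx => if_neg fun h => hx (Fin.ext h)
    · simp
  · have hj : ¬(j : ℕ) = i + (k + l) := by omega
    rw [if_neg hj]
    exact sum_eq_zero fun x _ => if_neg (by omega)

variable (m r : ℕ)

theorem Amat_eq_contractQP (k : ℕ) : Amat m r k = contractQP (shiftMatrix ℂ (r + 1) k) := by
  simp only [Amat, contractQP, shiftMatrix, of_apply, ite_smul, one_smul, zero_smul]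

theorem satisfiesTakiffBracket_Amat : SatisfiesTakiffBracket poisDerivation (Amat m r) := by
  intro k l a b c d
  simp only [Amat_eq_contractQP, poisDerivation_apply, pois_contractQP, shiftMatrix_mul,
    add_comm l k]

variable {r} in
theorem Amat_eq_zero_of_lt {k : ℕ} (h : r < k) : Amat m r k = 0 := by
  refine sum_eq_zero fun i _ => sum_eq_zero fun j _ => if_neg ?_
  have hj := j.isLt
  omega

theorem Sinv_succ (n : ℕ) : Sinv m r (n + 1) = traceSqCoeff (Amat m r) n := by
  simp only [Sinv, traceSqCoeff, Nat.add_right_cancel_iff]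
  rw [← sum_product', ← sum_filter]
  refine sum_subset ?_ ?_
  · intro p hp
    exact mem_antidiagonal.mpr (mem_filter.mp hp).2
  · intro p hp hp'
    have hlt : r < p.1 ∨ r < p.2 := by
      simp only [mem_filter, mem_product, mem_range, mem_antidiagonal] at hp hp'
      omega
    rcases hlt with h | h <;> simp [Amat_eq_zero_of_lt m h]

end Takiff

/-- the spectral invariants are in involution with respect to the canonical
Poisson bracket: `{S_s, S_{s'}} = 0` for all `1 ≤ s, s' ≤ 2r+1`. -/
theorem statement15 (m r : ℕ) (hm : 1 ≤ m)
    (s s' : ℕ) (hs1 : 1 ≤ s) (hs2 : s ≤ 2 * r + 1) (hs'1 : 1 ≤ s') (hs'2 : s' ≤ 2 * r + 1) :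
    pois (Sinv m r s) (Sinv m r s') = 0 := by
  obtain ⟨n, rfl⟩ := Nat.exists_eq_add_of_le' hs1
  obtain ⟨n', rfl⟩ := Nat.exists_eq_add_of_le' hs'1
  rw [Sinv_succ, Sinv_succ, ← poisDerivation_apply]
  exact (satisfiesTakiffBracket_Amat m r).bracket_traceSqCoeff_eq_zero
    poisDerivation_antisymm n n'
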